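/- Every graft obtainable from the graft (K₂,{t}) (where K₂ is the complete graph on two vertices and t is one of its two vertices) by a finite sequence of pendent, clone, and join operations is clean; in particular, the underlying graph of any such graft contains no induced wheel. -/

import Mathlib

universe u

/-- A *wheel* is a graph consisting of an induced cycle of length at least 4 together with a
single additional vertex (the hub) having at least 3 neighbours on the cycle. -/
def IsWheel {V : Type u} (G : SimpleGraph V) : Prop :=
  ∃ (w : V) (n : ℕ), 4 ≤ n ∧
    Nonempty (G.induce {u | u ≠ w} ≃g SimpleGraph.cycleGraph n) ∧
    3 ≤ (G.neighborSet w).ncard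

/-- A graph is a *fan with pivot `f`* if deleting `f` leaves an induced path and `f` has at
least 3 neighbours (necessarily on that path). -/
def IsFanWithPivot {V : Type u} (G : SimpleGraph V) (f : V) : Prop :=
  (∃ n : ℕ, Nonempty (G.induce {u | u ≠ f} ≃g SimpleGraph.pathGraph n)) ∧
    3 ≤ (G.neighborSet f).ncard

/-- A *fan* is a graph consisting of an induced path and a single additional vertex (the pivot)
with at least 3 neighbours on the path. -/
def IsFan {V : Type u} (G : SimpleGraph V) : Prop :=
  ∃ f : V, IsFanWithPivot G f

/-- A *guarded fan* is a graft `(F, M)` such that `F` is a fan with pivot `f` and both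
endpoints of the path `F \ {f}` lie in `M`. -/
def IsGuardedFan {V : Type u} (G : SimpleGraph V) (M : Set V) : Prop :=
  ∃ (f : V) (n : ℕ) (e : G.induce {u | u ≠ f} ≃g SimpleGraph.pathGraph (n + 1)),
    3 ≤ (G.neighborSet f).ncard ∧
    ((e.symm 0 : {u // u ≠ f}) : V) ∈ M ∧ ((e.symm (Fin.last n) : {u // u ≠ f}) : V) ∈ M

/-- A *mountable path* is a graft `(P, M)` such that `P` is a path and `|M| ≥ 3`. -/
def IsMountablePath {V : Type u} (G : SimpleGraph V) (M : Set V) : Prop :=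
  (∃ n : ℕ, Nonempty (G ≃g SimpleGraph.pathGraph n)) ∧ 3 ≤ M.ncard

/-- A *theta* is a graph consisting of three internally vertex-disjoint paths of length at
least 2 with common endpoints, such that every edge lies on one of the three paths. -/
def IsTheta {V : Type u} (G : SimpleGraph V) : Prop :=
  ∃ (a b : V) (p₁ p₂ p₃ : G.Walk a b),
    a ≠ b ∧ p₁.IsPath ∧ p₂.IsPath ∧ p₃.IsPath ∧
    2 ≤ p₁.length ∧ 2 ≤ p₂.length ∧ 2 ≤ p₃.length ∧
    (∀ v, v ∈ p₁.support → v ∈ p₂.support → v = a ∨ v = b) ∧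
    (∀ v, v ∈ p₁.support → v ∈ p₃.support → v = a ∨ v = b) ∧
    (∀ v, v ∈ p₂.support → v ∈ p₃.support → v = a ∨ v = b) ∧
    (∀ v : V, v ∈ p₁.support ∨ v ∈ p₂.support ∨ v ∈ p₃.support) ∧
    (∀ e ∈ G.edgeSet, e ∈ p₁.edges ∨ e ∈ p₂.edges ∨ e ∈ p₃.edges)

/-- A graft `(G, T)` is *clean* if (1) `G` is triangle-free, (2) `T` is a stable set,
(3) `G` contains no induced wheel, (4) `(G,T)` contains no induced guarded fan, and
(5) `(G,T)` contains no induced mountable path. -/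
def IsCleanGraft {V : Type u} (G : SimpleGraph V) (T : Set V) : Prop :=
  G.CliqueFree 3 ∧
  (∀ u ∈ T, ∀ v ∈ T, ¬ G.Adj u v) ∧
  (∀ s : Set V, ¬ IsWheel (G.induce s)) ∧
  (∀ s : Set V, ¬ IsGuardedFan (G.induce s) (Subtype.val ⁻¹' T)) ∧
  (∀ s : Set V, ¬ IsMountablePath (G.induce s) (Subtype.val ⁻¹' T))

/-- The graph of `pendent((G,T),t)`: a new vertex (`none`) is added whose only
neighbour is `t`. -/
def pendentGraph {V : Type u} (G : SimpleGraph V) (t : V) : SimpleGraph (Option V) :=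
  SimpleGraph.fromRel (fun a b =>
    (∃ u v : V, a = some u ∧ b = some v ∧ G.Adj u v) ∨ (a = none ∧ b = some t))

/-- The distinguished set of `pendent((G,T),t)`: `T' = (T ∪ {t'}) \ {t}`. -/
def pendentT {V : Type u} (T : Set V) (t : V) : Set (Option V) :=
  insert none (some '' (T \ {t}))

/-- The graph of `clone((G,T),t)`: a new vertex (`none`) is added whose neighbourhood is
exactly the neighbourhood of `t` in `G`. -/
def cloneGraph {V : Type u} (G : SimpleGraph V) (t : V) : SimpleGraph (Option V) :=
  SimpleGraph.fromRel (fun a b =>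
    (∃ u v : V, a = some u ∧ b = some v ∧ G.Adj u v) ∨
    (∃ v : V, a = none ∧ b = some v ∧ G.Adj t v))

/-- The distinguished set of `clone((G,T),t)`: `T' = T ∪ {t'}`. -/
def cloneT {V : Type u} (T : Set V) : Set (Option V) :=
  insert none (some '' T)

/-- The graph of `join((G₁,T₁), X, (G₂,T₂))`, where the bijection `φ : X ≃ T₂` prescribes
which vertex of `T₂` is identified with which vertex of `X`. -/
def joinGraph {V₁ V₂ : Type u} (G₁ : SimpleGraph V₁) (G₂ : SimpleGraph V₂)
    (X : Set V₁) (T₂ : Set V₂) (φ : X ≃ T₂) :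
    SimpleGraph (V₁ ⊕ {v : V₂ // v ∉ T₂}) :=
  SimpleGraph.fromRel (fun a b =>
    (∃ u v : V₁, a = Sum.inl u ∧ b = Sum.inl v ∧ G₁.Adj u v) ∨
    (∃ u v : {v : V₂ // v ∉ T₂}, a = Sum.inr u ∧ b = Sum.inr v ∧ G₂.Adj ↑u ↑v) ∨
    (∃ (x : X) (w : {v : V₂ // v ∉ T₂}), a = Sum.inl ↑x ∧ b = Sum.inr w ∧ G₂.Adj ↑(φ x) ↑w) ∨
    (∃ x y : X, a = Sum.inl ↑x ∧ b = Sum.inl ↑y ∧ G₂.Adj ↑(φ x) ↑(φ y)))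

/-- The distinguished set of `join((G₁,T₁), X, (G₂,T₂))` is `T₁`. -/
def joinT {V₁ V₂ : Type u} (T₁ : Set V₁) (T₂ : Set V₂) : Set (V₁ ⊕ {v : V₂ // v ∉ T₂}) :=
  Sum.inl '' T₁

/-- A *graph–stable-set pair*: a graph together with a set of (stable) sets of vertices. -/
structure GSPair : Type 1 where
  V : Type
  G : SimpleGraph V
  S : Set (Set V)

/-- The `NEXT` procedure of the Burling construction.  The new vertex type consists of the
original vertices, the vertices `(S, u)` of the copy `H_S` for each `S ∈ 𝒮`, and the new
vertices `v_{S,T}` for `S ∈ 𝒮` and `T ∈ 𝒮(H_S)`. -/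
def NEXT (P : GSPair) : GSPair where
  V := P.V ⊕ ((↥P.S × P.V) ⊕ (↥P.S × ↥P.S))
  G := SimpleGraph.fromRel (fun a b =>
    (∃ u v : P.V, a = Sum.inl u ∧ b = Sum.inl v ∧ P.G.Adj u v) ∨
    (∃ (S : ↥P.S) (u v : P.V),
      a = Sum.inr (Sum.inl (S, u)) ∧ b = Sum.inr (Sum.inl (S, v)) ∧ P.G.Adj u v) ∨
    (∃ (S T : ↥P.S) (u : P.V),
      a = Sum.inr (Sum.inr (S, T)) ∧ b = Sum.inr (Sum.inl (S, u)) ∧ u ∈ (T : Set P.V)))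
  S := { A | ∃ S T : ↥P.S,
      A = Sum.inl '' (S : Set P.V) ∪ (fun u => Sum.inr (Sum.inl (S, u))) '' (T : Set P.V) ∨
      A = insert (Sum.inr (Sum.inr (S, T))) (Sum.inl '' (S : Set P.V)) }

/-- `BurlingPair k` is the graph–stable-set pair `(G'_{k+1}, 𝒮_{k+1})`; in particular
`BurlingPair 0 = (K₁, {V(K₁)})` and `(BurlingPair (k-1)).G` is the `k`-th Burling graph. -/
def BurlingPair : ℕ → GSPair
  | 0 => ⟨Unit, ⊥, {Set.univ}⟩
  | (k + 1) => NEXT (BurlingPair k)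

/-- A *graft*: a graph together with a distinguished set of vertices. -/
structure GraftData : Type 1 where
  V : Type
  G : SimpleGraph V
  T : Set V

/-- The step `(G_k, T_k) ↦ (G_{k+1}, T_{k+1})` of the graft construction of Burling graphs,
with all the pendent, clone and join operations of the construction performed at once.

Vertices: `inl x` for `x ∈ V(G_k)`; `inr (inl ⟨u, w⟩)` for `u ∈ T_k` and
`w : ↥T_k ⊕ ↥T_k` with `w ≠ inl u`, the `2|T_k| - 1` clones of `u` (so that
`X_u = {u} ∪ {⟨u, w⟩}` has been identified with `S'_u ≃ T_k ⊕ T_k`, the vertex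
indexed by `inl v` being the copy of `v` in `S_u` and the vertex indexed by `inr v`
being the pendant `t_{u,v}`); and `inr (inr (u, y))` for the vertices of the copy
`H'_u` not in `S'_u`, namely `y = inl x` for a copy of `x ∈ V(G_k) \ T_k` and
`y = inr v` for the clone `v_u` of `v ∈ T_k`. -/
def nextGraft (P : GraftData) : GraftData where
  V := P.V ⊕ ((Σ u : ↥P.T, {w : ↥P.T ⊕ ↥P.T // w ≠ Sum.inl u}) ⊕
        (↥P.T × ({v : P.V // v ∉ P.T} ⊕ ↥P.T)))
  G := SimpleGraph.fromRel (fun a b =>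
    -- edges of `G_k`
    (∃ x y : P.V, a = Sum.inl x ∧ b = Sum.inl y ∧ P.G.Adj x y) ∨
    -- each clone of `u` is adjacent to `N_{G_k}(u)`
    (∃ (x : P.V) (u : ↥P.T) (w : {w : ↥P.T ⊕ ↥P.T // w ≠ Sum.inl u}),
      a = Sum.inl x ∧ b = Sum.inr (Sum.inl ⟨u, w⟩) ∧ P.G.Adj ↑u x) ∨
    -- `u` (identified with the copy of `u` in `S_u`) is adjacent to the copies of `N_{G_k}(u)`
    (∃ (u : ↥P.T) (x : {v : P.V // v ∉ P.T}),
      a = Sum.inl ↑u ∧ b = Sum.inr (Sum.inr (u, Sum.inl x)) ∧ P.G.Adj ↑u ↑x) ∨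
    -- the clone of `u` identified with the copy of `v ∈ S_u` is adjacent to copies of `N(v)`
    (∃ (u : ↥P.T) (w : {w : ↥P.T ⊕ ↥P.T // w ≠ Sum.inl u}) (v : ↥P.T)
        (x : {v : P.V // v ∉ P.T}),
      a = Sum.inr (Sum.inl ⟨u, w⟩) ∧ b = Sum.inr (Sum.inr (u, Sum.inl x)) ∧
        (w : ↥P.T ⊕ ↥P.T) = Sum.inl v ∧ P.G.Adj ↑v ↑x) ∨
    -- the clone of `u` identified with the pendant `t_{u,v}` is adjacent to the clone `v_u`
    (∃ (u : ↥P.T) (w : {w : ↥P.T ⊕ ↥P.T // w ≠ Sum.inl u}) (v : ↥P.T),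
      a = Sum.inr (Sum.inl ⟨u, w⟩) ∧ b = Sum.inr (Sum.inr (u, Sum.inr v)) ∧
        (w : ↥P.T ⊕ ↥P.T) = Sum.inr v) ∨
    -- edges of `G_k` inside the copy `H'_u`
    (∃ (u : ↥P.T) (x y : {v : P.V // v ∉ P.T}),
      a = Sum.inr (Sum.inr (u, Sum.inl x)) ∧ b = Sum.inr (Sum.inr (u, Sum.inl y)) ∧
        P.G.Adj ↑x ↑y) ∨
    -- the clone `v_u` is adjacent to the copies of `N_{G_k}(v)`
    (∃ (u : ↥P.T) (x : {v : P.V // v ∉ P.T}) (v : ↥P.T),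
      a = Sum.inr (Sum.inr (u, Sum.inl x)) ∧ b = Sum.inr (Sum.inr (u, Sum.inr v)) ∧
        P.G.Adj ↑v ↑x))
  T := { a | (∃ u ∈ P.T, a = Sum.inl u) ∨
      (∃ c : (Σ u : ↥P.T, {w : ↥P.T ⊕ ↥P.T // w ≠ Sum.inl u}), a = Sum.inr (Sum.inl c)) }

/-- `BurlingGraft k` is the graft `(G_{k+1}, T_{k+1})`; in particular
`BurlingGraft 0 = (K₂, {t})`. -/
def BurlingGraft : ℕ → GraftData
  | 0 => ⟨Bool, ⊤, {true}⟩
  | (k + 1) => nextGraft (BurlingGraft k)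

/-- The graph `G*` obtained from a graph–stable-set pair by adding, for each `S ∈ 𝒮`,
a new vertex `v_S` whose neighbourhood is exactly `S`. -/
def GStar (P : GSPair) : SimpleGraph (P.V ⊕ ↥P.S) :=
  SimpleGraph.fromRel (fun a b =>
    (∃ u v : P.V, a = Sum.inl u ∧ b = Sum.inl v ∧ P.G.Adj u v) ∨
    (∃ (S : ↥P.S) (u : P.V), a = Sum.inr S ∧ b = Sum.inl u ∧ u ∈ (S : Set P.V)))

/-- The grafts obtainable from the graft `(K₂, {t})` by a finite sequence of pendent,
clone and join operations. -/
inductive Obtainable : GraftData → Prop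
  | base : Obtainable ⟨Bool, ⊤, {true}⟩
  | pendent (P : GraftData) (hP : Obtainable P) (t : P.V) (ht : t ∈ P.T) :
      Obtainable ⟨Option P.V, pendentGraph P.G t, pendentT P.T t⟩
  | clone (P : GraftData) (hP : Obtainable P) (t : P.V) (ht : t ∈ P.T) :
      Obtainable ⟨Option P.V, cloneGraph P.G t, cloneT P.T⟩
  | join (P Q : GraftData) (hP : Obtainable P) (hQ : Obtainable Q)
      (X : Set P.V) (hX : X ⊆ P.T)
      (hnb : ∀ x ∈ X, ∀ y ∈ X, P.G.neighborSet x = P.G.neighborSet y)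
      (φ : X ≃ ↥Q.T) :
      Obtainable ⟨P.V ⊕ {v : Q.V // v ∉ Q.T}, joinGraph P.G Q.G X Q.T φ, Sum.inl '' P.T⟩

/-- Induced path on `n` vertices. -/
def IP {V : Type u} (G : SimpleGraph V) (n : ℕ) (p : ℕ → V) : Prop :=
  ∀ i, i < n → ∀ j, j < n → (p i = p j → i = j) ∧ (G.Adj (p i) (p j) ↔ (j = i + 1 ∨ i = j + 1))

/-- Induced cycle on `n` vertices. -/
def IC {V : Type u} (G : SimpleGraph V) (n : ℕ) (c : ℕ → V) : Prop :=
  ∀ i, i < n → ∀ j, j < n → (c i = c j → i = j) ∧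
    (G.Adj (c i) (c j) ↔ (j = i + 1 ∨ i = j + 1 ∨ (i = 0 ∧ j + 1 = n) ∨ (j = 0 ∧ i + 1 = n)))

/-- At least three indices satisfy `Q`. -/
def Three {V : Type u} (n : ℕ) (p : ℕ → V) (Q : V → Prop) : Prop :=
  ∃ i j k, i < n ∧ j < n ∧ k < n ∧ i ≠ j ∧ j ≠ k ∧ i ≠ k ∧ Q (p i) ∧ Q (p j) ∧ Q (p k)

/-- Cleanness relative to a set of vertices, phrased with sequences. -/
structure CleanOn {V : Type u} (G : SimpleGraph V) (S T : Set V) : Prop where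
  tri : ∀ a ∈ S, ∀ b ∈ S, ∀ c ∈ S, G.Adj a b → G.Adj b c → G.Adj a c → False
  stab : ∀ a ∈ S, ∀ b ∈ S, a ∈ T → b ∈ T → G.Adj a b → False
  wheel : ∀ n c w, 4 ≤ n → IC G n c → (∀ i, i < n → c i ∈ S) → w ∈ S →
    Three n c (G.Adj w) → False
  fan : ∀ n p f, IP G n p → (∀ i, i < n → p i ∈ S) → f ∈ S → p 0 ∈ T → p (n - 1) ∈ T →
    Three n p (G.Adj f) → False
  mount : ∀ n p j, IP G n p → (∀ i, i < n → p i ∈ S) → p 0 ∈ T → p (n - 1) ∈ T →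
    0 < j → j < n - 1 → p j ∈ T → False

theorem Three.lt {V : Type u} {n : ℕ} {p : ℕ → V} {Q : V → Prop} (h : Three n p Q) :
    ∃ i j k, i < j ∧ j < k ∧ k < n ∧ Q (p i) ∧ Q (p j) ∧ Q (p k) := by
  obtain ⟨i, j, k, hi, hj, hk, hij, hjk, hik, h1, h2, h3⟩ := h
  rcases lt_or_gt_of_ne hij with a | a <;> rcases lt_or_gt_of_ne hjk with b | b <;>
    rcases lt_or_gt_of_ne hik with c | c
  · exact ⟨i, j, k, by omega, by omega, by omega, h1, h2, h3⟩
  · omega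
  · exact ⟨i, k, j, by omega, by omega, by omega, h1, h3, h2⟩
  · exact ⟨k, i, j, by omega, by omega, by omega, h3, h1, h2⟩
  · exact ⟨j, i, k, by omega, by omega, by omega, h2, h1, h3⟩
  · exact ⟨j, k, i, by omega, by omega, by omega, h2, h3, h1⟩
  · omega
  · exact ⟨k, j, i, by omega, by omega, by omega, h3, h2, h1⟩

theorem IP.sub {V : Type u} {G : SimpleGraph V} {n : ℕ} {p : ℕ → V} (h : IP G n p)
    (a m : ℕ) (ham : a + m ≤ n) : IP G m (fun i => p (i + a)) := by
  intro i hi j hj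
  have := h (i + a) (by omega) (j + a) (by omega)
  refine ⟨fun e => ?_, ?_⟩
  · have := this.1 e; omega
  · rw [this.2]; omega

theorem IP.rev {V : Type u} {G : SimpleGraph V} {n : ℕ} {p : ℕ → V} (h : IP G n p) :
    IP G n (fun i => p (n - 1 - i)) := by
  intro i hi j hj
  have := h (n - 1 - i) (by omega) (n - 1 - j) (by omega)
  refine ⟨fun e => ?_, ?_⟩
  · have := this.1 e; omega
  · rw [this.2]; omega

theorem Three.rev {V : Type u} {n : ℕ} {p : ℕ → V} {Q : V → Prop} (h : Three n p Q) :
    Three n (fun i => p (n - 1 - i)) Q := by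
  obtain ⟨i, j, k, hi, hj, hk, hij, hjk, hik, h1, h2, h3⟩ := h
  refine ⟨n - 1 - i, n - 1 - j, n - 1 - k, by omega, by omega, by omega, by omega, by omega,
    by omega, ?_, ?_, ?_⟩ <;> beta_reduce
  · rwa [show n - 1 - (n - 1 - i) = i by omega]
  · rwa [show n - 1 - (n - 1 - j) = j by omega]
  · rwa [show n - 1 - (n - 1 - k) = k by omega]

theorem CleanOn.mount3 {V : Type u} {G : SimpleGraph V} {S T : Set V} (hc : CleanOn G S T)
    {n : ℕ} {p : ℕ → V} (h : IP G n p) (hS : ∀ i, i < n → p i ∈ S)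
    (h3 : Three n p (· ∈ T)) : False := by
  obtain ⟨i, j, k, hij, hjk, hk, h1, h2, h3⟩ := h3.lt
  refine hc.mount (k - i + 1) _ (j - i) (h.sub i (k - i + 1) (by omega))
    (fun l hl => hS _ (by omega)) ?_ ?_ (by omega) (by omega) ?_
  · simpa using h1
  · simpa [show k - i + i = k by omega] using h3
  · simpa [show j - i + i = j by omega] using h2

theorem IC.rot {V : Type u} {G : SimpleGraph V} {n : ℕ} {c : ℕ → V} (h : IC G n c)
    (k : ℕ) (hk : k < n) : ∃ c', IC G n c' ∧ c' 0 = c k ∧ (∀ i, i < n → ∃ j, j < n ∧ c' i = c j) ∧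
      (∀ i, i < n → ∃ j, j < n ∧ c i = c' j) ∧
      (∀ Q : V → Prop, Three n c Q → Three n c' Q) := by
  refine ⟨fun i => if i + k < n then c (i + k) else c (i + k - n), ?_, ?_, ?_, ?_, ?_⟩
  · intro i hi j hj
    beta_reduce
    split_ifs with h1 h2 h2
    · have := h (i + k) (by omega) (j + k) (by omega)
      refine ⟨fun e => ?_, ?_⟩
      · have := this.1 e; omega
      · rw [this.2]; omega
    · have := h (i + k) (by omega) (j + k - n) (by omega)
      refine ⟨fun e => ?_, ?_⟩
      · have := this.1 e; omega
      · rw [this.2]; omega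
    · have := h (i + k - n) (by omega) (j + k) (by omega)
      refine ⟨fun e => ?_, ?_⟩
      · have := this.1 e; omega
      · rw [this.2]; omega
    · have := h (i + k - n) (by omega) (j + k - n) (by omega)
      refine ⟨fun e => ?_, ?_⟩
      · have := this.1 e; omega
      · rw [this.2]; omega
  · simp [hk]
  · intro i hi
    beta_reduce
    split_ifs
    · exact ⟨i + k, by omega, rfl⟩
    · exact ⟨i + k - n, by omega, rfl⟩
  · intro i hi
    refine ⟨if k ≤ i then i - k else i + n - k, ?_, ?_⟩
    · split_ifs <;> omega
    · beta_reduce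
      congr 1
      split_ifs <;> first | omega | (congr 1; omega)
  · rintro Q ⟨i, j, l, hi, hj, hl, hij, hjl, hil, h1, h2, h3⟩
    have key : ∀ i, i < n → (if (if k ≤ i then i - k else i + n - k) + k < n then
        c ((if k ≤ i then i - k else i + n - k) + k) else
        c ((if k ≤ i then i - k else i + n - k) + k - n)) = c i := by
      intro i hi
      split_ifs <;> first | omega | (congr 1; omega)
    refine ⟨if k ≤ i then i - k else i + n - k, if k ≤ j then j - k else j + n - k,
      if k ≤ l then l - k else l + n - k, ?_, ?_, ?_, ?_, ?_, ?_, ?_, ?_, ?_⟩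
    · split_ifs <;> omega
    · split_ifs <;> omega
    · split_ifs <;> omega
    · split_ifs <;> omega
    · split_ifs <;> omega
    · split_ifs <;> omega
    · beta_reduce; rw [key i hi]; exact h1
    · beta_reduce; rw [key j hj]; exact h2
    · beta_reduce; rw [key l hl]; exact h3

theorem IC.path {V : Type u} {G : SimpleGraph V} {n : ℕ} {c : ℕ → V} (h : IC G n c) :
    IP G (n - 1) (fun i => c (i + 1)) := by
  intro i hi j hj
  have := h (i + 1) (by omega) (j + 1) (by omega)
  refine ⟨fun e => ?_, ?_⟩
  · have := this.1 e; omega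
  · rw [this.2]; omega

/-- dropping the first vertex -/
theorem Three.tail {V : Type u} {n : ℕ} {p : ℕ → V} {Q : V → Prop} (h : Three n p Q)
    (h0 : ¬ Q (p 0)) : Three (n - 1) (fun i => p (i + 1)) Q := by
  obtain ⟨i, j, k, hi, hj, hk, hij, hjk, hik, h1, h2, h3⟩ := h
  have a1 : i ≠ 0 := by rintro rfl; exact h0 h1
  have a2 : j ≠ 0 := by rintro rfl; exact h0 h2
  have a3 : k ≠ 0 := by rintro rfl; exact h0 h3
  refine ⟨i - 1, j - 1, k - 1, by omega, by omega, by omega, by omega, by omega,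
    by omega, ?_, ?_, ?_⟩ <;> beta_reduce
  · rwa [show i - 1 + 1 = i by omega]
  · rwa [show j - 1 + 1 = j by omega]
  · rwa [show k - 1 + 1 = k by omega]

theorem IC.no3 {V : Type u} {G : SimpleGraph V} {n : ℕ} {c : ℕ → V} (h : IC G n c)
    {m : ℕ} (hm : m < n) (h3 : Three n c (G.Adj (c m))) : False := by
  obtain ⟨i, j, k, hi, hj, hk, hij, hjk, hik, h1, h2, h3⟩ := h3
  rw [(h m hm i hi).2] at h1
  rw [(h m hm j hj).2] at h2
  rw [(h m hm k hk).2] at h3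
  omega

theorem IP.no3 {V : Type u} {G : SimpleGraph V} {n : ℕ} {c : ℕ → V} (h : IP G n c)
    {m : ℕ} (hm : m < n) (h3 : Three n c (G.Adj (c m))) : False := by
  obtain ⟨i, j, k, hi, hj, hk, hij, hjk, hik, h1, h2, h3⟩ := h3
  rw [(h m hm i hi).2] at h1
  rw [(h m hm j hj).2] at h2
  rw [(h m hm k hk).2] at h3
  omega

/-- going up, a property that changes must change at some step -/
theorem cross {Q : ℕ → Prop} {a b : ℕ} (hab : a ≤ b) (ha : Q a) (hb : ¬ Q b) :
    ∃ k, a ≤ k ∧ k < b ∧ Q k ∧ ¬ Q (k + 1) := by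
  induction b, hab using Nat.le_induction with
  | base => exact absurd ha hb
  | succ b hab ih =>
    by_cases h : Q b
    · exact ⟨b, hab, by omega, h, hb⟩
    · obtain ⟨k, h1, h2, h3⟩ := ih h
      exact ⟨k, h1, by omega, h3⟩

theorem clean_pendent {V : Type u} {G : SimpleGraph V} {T T₀ : Set V} {t t' : V}
    (hc : CleanOn G {v | v ≠ t'} T₀) (hn : ∀ v, G.Adj t' v → v = t) (htt : t ≠ t')
    (ht : t ∉ T) (htT₀ : t ∈ T₀) (hT : ∀ x ∈ T, x ≠ t' → x ∈ T₀) :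
    CleanOn G Set.univ T := by
  have no3 : ∀ n p, ((∃ c, p = c ∧ IP G n c) ∨ IC G n p) → ¬ Three n p (G.Adj t') := by
    rintro n p h ⟨i, j, k, hi, hj, hk, hij, hjk, hik, h1, h2, h3⟩
    have e : p i = p j := (hn _ h1).trans (hn _ h2).symm
    rcases h with ⟨c, rfl, h⟩ | h
    · exact hij ((h i hi j hj).1 e)
    · exact hij ((h i hi j hj).1 e)
  have ends : ∀ n p, IP G n p → ∀ i, i < n → p i = t' → i = 0 ∨ i = n - 1 := by
    intro n p h i hi e
    by_contra hcon
    have h1 := ((h i hi (i + 1) (by omega)).2).2 (by omega)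
    have h2 := ((h i hi (i - 1) (by omega)).2).2 (by omega)
    rw [e] at h1 h2
    have := (h (i + 1) (by omega) (i - 1) (by omega)).1 ((hn _ h1).trans (hn _ h2).symm)
    omega
  have fan0 : ∀ n p f, IP G n p → p 0 ∈ T → p (n - 1) ∈ T → p 0 = t' →
      Three n p (G.Adj f) → False := by
    intro n p f h h0 hl e h3
    have hn3 : 3 ≤ n := by obtain ⟨i, j, k, h⟩ := h3.lt; omega
    have e1 : p 1 = t := by
      apply hn; rw [← e]; exact ((h 0 (by omega) 1 (by omega)).2).2 (by omega)
    have hf : f ≠ t' := by rintro rfl; exact no3 n p (Or.inl ⟨p, rfl, h⟩) h3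
    have hf0 : ¬ G.Adj f (p 0) := by
      intro hadj
      rw [e] at hadj
      have := hn _ hadj.symm
      rw [this, ← e1] at h3
      exact h.no3 (by omega) h3
    refine hc.fan (n - 1) _ f (h.sub 1 (n - 1) (by omega)) ?_ hf ?_ ?_ (h3.tail hf0)
    · intro i hi e'
      have := (h 0 (by omega) (i + 1) (by omega)).1 (e.trans e'.symm)
      omega
    · simpa [e1] using htT₀
    · beta_reduce
      rw [show n - 1 - 1 + 1 = n - 1 by omega]
      refine hT _ hl fun e' => ?_
      have := (h 0 (by omega) (n - 1) (by omega)).1 (e.trans e'.symm)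
      omega
  have mount0 : ∀ n p j, IP G n p → p 0 ∈ T → p (n - 1) ∈ T → p 0 = t' →
      0 < j → j < n - 1 → p j ∈ T → False := by
    intro n p j h h0 hl e hj hj' hjT
    have e1 : p 1 = t := by
      apply hn; rw [← e]; exact ((h 0 (by omega) 1 (by omega)).2).2 (by omega)
    have hj1 : j ≠ 1 := by rintro rfl; rw [e1] at hjT; exact ht hjT
    refine hc.mount (n - 1) _ (j - 1) (h.sub 1 (n - 1) (by omega)) ?_ ?_ ?_ (by omega) (by omega) ?_
    · intro i hi e'
      have := (h 0 (by omega) (i + 1) (by omega)).1 (e.trans e'.symm)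
      omega
    · simpa [e1] using htT₀
    · beta_reduce
      rw [show n - 1 - 1 + 1 = n - 1 by omega]
      refine hT _ hl fun e' => ?_
      have := (h 0 (by omega) (n - 1) (by omega)).1 (e.trans e'.symm)
      omega
    · beta_reduce
      rw [show j - 1 + 1 = j by omega]
      refine hT _ hjT fun e' => ?_
      have := (h 0 (by omega) j (by omega)).1 (e.trans e'.symm)
      omega
  constructor
  · intro a _ b _ c _ hab hbc hac
    have aux : ∀ x y, G.Adj t' x → G.Adj t' y → G.Adj x y → False := by
      intro x y hx hy hxy
      rw [hn _ hx, hn _ hy] at hxy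
      exact hxy.ne rfl
    refine hc.tri a ?_ b ?_ c ?_ hab hbc hac
    · rintro rfl; exact aux _ _ hab hac hbc
    · rintro rfl; exact aux _ _ hab.symm hbc hac
    · rintro rfl; exact aux _ _ hac.symm hbc.symm hab
  · intro a _ b _ ha hb hab
    refine hc.stab a ?_ b ?_ (hT a ha ?_) (hT b hb ?_) hab
    all_goals rintro rfl
    all_goals first
      | (have := hn _ hab; subst this; exact ht hb)
      | (have := hn _ hab.symm; subst this; exact ht ha)
  · intro n c w hn4 h _ _ h3
    refine hc.wheel n c w hn4 h ?_ ?_ h3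
    · intro i hi e
      obtain ⟨c', h', e0, -⟩ := h.rot i hi
      have h1 := ((h' 0 (by omega) 1 (by omega)).2).2 (by omega)
      have h2 := ((h' 0 (by omega) (n - 1) (by omega)).2).2 (by omega)
      rw [e0, e] at h1 h2
      have := (h' 1 (by omega) (n - 1) (by omega)).1 ((hn _ h1).trans (hn _ h2).symm)
      omega
    · rintro rfl; exact no3 n c (Or.inr h) h3
  · intro n p f h _ _ h0 hl h3
    by_cases e0 : p 0 = t'
    · exact fan0 n p f h h0 hl e0 h3
    by_cases el : p (n - 1) = t'
    · refine fan0 n _ f h.rev ?_ ?_ ?_ h3.rev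
      · simpa using hl
      · simpa using h0
      · simpa using el
    refine hc.fan n p f h ?_ ?_ (hT _ h0 e0) (hT _ hl el) h3
    · intro i hi e
      rcases ends n p h i hi e with rfl | rfl
      · exact e0 e
      · exact el e
    · rintro rfl; exact no3 n p (Or.inl ⟨p, rfl, h⟩) h3
  · intro n p j h _ h0 hl hj hj' hjT
    by_cases e0 : p 0 = t'
    · exact mount0 n p j h h0 hl e0 hj hj' hjT
    by_cases el : p (n - 1) = t'
    · refine mount0 n _ (n - 1 - j) h.rev ?_ ?_ ?_ (by omega) (by omega) ?_
      · simpa using hl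
      · simpa using h0
      · simpa using el
      · beta_reduce; rwa [show n - 1 - (n - 1 - j) = j by omega]
    have hne : ∀ i, i < n → p i ≠ t' := by
      intro i hi e
      rcases ends n p h i hi e with rfl | rfl
      · exact e0 e
      · exact el e
    exact hc.mount n p j h hne (hT _ h0 e0) (hT _ hl el) hj hj' (hT _ hjT (hne _ (by omega)))

theorem clean_clone {V : Type u} {G : SimpleGraph V} {T : Set V} {t t' : V}
    (hc : CleanOn G {v | v ≠ t'} T) (hc' : CleanOn G {v | v ≠ t} T)
    (hn : ∀ v, G.Adj t v ↔ G.Adj t' v) (htt : t ≠ t') (ht : t ∈ T) (ht' : t' ∈ T) :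
    CleanOn G Set.univ T := by
  have nadj : ¬ G.Adj t t' := fun h => ((hn _).1 h).ne rfl
  have tri : ∀ a b c, G.Adj a b → G.Adj b c → G.Adj a c → False := by
    intro a b c hab hbc hac
    by_cases h : a ≠ t' ∧ b ≠ t' ∧ c ≠ t'
    · exact hc.tri a h.1 b h.2.1 c h.2.2 hab hbc hac
    by_cases h' : a ≠ t ∧ b ≠ t ∧ c ≠ t
    · exact hc'.tri a h'.1 b h'.2.1 c h'.2.2 hab hbc hac
    grind [G.adj_comm, G.irrefl]
  have stab : ∀ a b, a ∈ T → b ∈ T → G.Adj a b → False := by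
    intro a b ha hb hab
    by_cases h : a ≠ t' ∧ b ≠ t'
    · exact hc.stab a h.1 b h.2 ha hb hab
    by_cases h' : a ≠ t ∧ b ≠ t
    · exact hc'.stab a h'.1 b h'.2 ha hb hab
    grind [G.adj_comm, G.irrefl]
  have cyc : ∀ n c, 4 ≤ n → IC G n c → (∃ i, i < n ∧ c i = t) → (∃ i, i < n ∧ c i = t') →
      n = 4 := by
    rintro n c h4 h ⟨i, hi, ei⟩ hj
    obtain ⟨c', h', e0, -, hr, -⟩ := h.rot i hi
    obtain ⟨j, hj, ej⟩ := hj
    obtain ⟨k, hk, ek⟩ := hr j hj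
    rw [ei] at e0
    rw [ej] at ek
    have h1 := ((h' 0 (by omega) 1 (by omega)).2).2 (by omega)
    have h2 := ((h' 0 (by omega) (n - 1) (by omega)).2).2 (by omega)
    rw [e0, hn, ek, (h' _ hk _ (by omega)).2] at h1 h2
    have hk0 : k ≠ 0 := by rintro rfl; exact htt (e0.symm.trans ek.symm)
    omega
  have pth : ∀ n p i j, IP G n p → 2 ≤ n → i < j → j < n → (∀ v, G.Adj (p i) v ↔ G.Adj (p j) v) →
      n = 3 := by
    intro n p i j h h2 hij hj hv
    have a : i = 0 := by
      by_contra h0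
      have h1 := ((h i (by omega) (i - 1) (by omega)).2).2 (by omega)
      rw [hv, (h _ hj _ (by omega)).2] at h1
      omega
    have b : j = n - 1 := by
      by_contra h0
      have h1 := ((h j (by omega) (j + 1) (by omega)).2).2 (by omega)
      rw [← hv, (h _ (by omega) _ (by omega)).2] at h1
      omega
    have h1 := ((h i (by omega) (i + 1) (by omega)).2).2 (by omega)
    rw [hv, (h _ hj _ (by omega)).2] at h1
    omega
  have pth' : ∀ n p, IP G n p → 2 ≤ n → (∃ i, i < n ∧ p i = t) → (∃ i, i < n ∧ p i = t') →
      n = 3 := by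
    rintro n p h h2 ⟨i, hi, ei⟩ ⟨j, hj, ej⟩
    rcases lt_trichotomy i j with hij | hij | hij
    · exact pth n p i j h h2 hij hj (by rw [ei, ej]; exact hn)
    · subst hij; exact absurd (ei.symm.trans ej) htt
    · exact pth n p j i h h2 hij hi (by rw [ei, ej]; exact fun v => (hn v).symm)
  have sw : ∀ n p, Three n p (G.Adj t) ↔ Three n p (G.Adj t') := by
    intro n p; simp only [Three, hn]
  constructor
  · exact fun a _ b _ c _ => tri a b c
  · exact fun a _ b _ => stab a b
  · intro n c w h4 h _ _ h3
    by_cases hA : ∃ i, i < n ∧ c i = t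
    · obtain ⟨i, hi, ei⟩ := hA
      by_cases hB : ∃ i, i < n ∧ c i = t'
      · have := cyc n c h4 h ⟨i, hi, ei⟩ hB
        subst this
        obtain ⟨i, j, k, hij, hjk, hk, h1, h2, h3⟩ := h3.lt
        by_cases hij' : j = i + 1
        · exact tri _ _ _ h1 ((h i (by omega) j (by omega)).2.2 (by omega)) h2
        · exact tri _ _ _ h2 ((h j (by omega) k (by omega)).2.2 (by omega)) h3
      · refine hc.wheel n c w h4 h (fun i hi e => hB ⟨i, hi, e⟩) ?_ h3
        rintro rfl
        rw [← sw, ← ei] at h3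
        exact h.no3 hi h3
    · refine hc'.wheel n c w h4 h (fun i hi e => hA ⟨i, hi, e⟩) ?_ h3
      rintro rfl
      by_cases hB : ∃ i, i < n ∧ c i = t'
      · obtain ⟨i, hi, ei⟩ := hB
        rw [sw, ← ei] at h3
        exact h.no3 hi h3
      · exact hc.wheel n c w h4 h (fun i hi e => hB ⟨i, hi, e⟩) htt h3
  · intro n c w h _ _ h0 hl h3
    have hn3 : 3 ≤ n := by obtain ⟨i, j, k, h⟩ := h3.lt; omega
    by_cases hA : ∃ i, i < n ∧ c i = t
    · obtain ⟨i, hi, ei⟩ := hA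
      by_cases hB : ∃ i, i < n ∧ c i = t'
      · have := pth' n c h (by omega) ⟨i, hi, ei⟩ hB
        subst this
        obtain ⟨i, j, k, hij, hjk, hk, h1, h2, h3⟩ := h3.lt
        exact tri _ _ _ h1 ((h i (by omega) j (by omega)).2.2 (by omega)) h2
      · refine hc.fan n c w h (fun i hi e => hB ⟨i, hi, e⟩) ?_ h0 hl h3
        rintro rfl
        rw [← sw, ← ei] at h3
        exact h.no3 hi h3
    · refine hc'.fan n c w h (fun i hi e => hA ⟨i, hi, e⟩) ?_ h0 hl h3
      rintro rfl
      by_cases hB : ∃ i, i < n ∧ c i = t'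
      · obtain ⟨i, hi, ei⟩ := hB
        rw [sw, ← ei] at h3
        exact h.no3 hi h3
      · exact hc.fan n c w h (fun i hi e => hB ⟨i, hi, e⟩) htt h0 hl h3
  · intro n p j h _ h0 hl hj hj' hjT
    by_cases hA : ∃ i, i < n ∧ p i = t
    · by_cases hB : ∃ i, i < n ∧ p i = t'
      · have := pth' n p h (by omega) hA hB
        subst this
        exact stab _ _ h0 hjT ((h 0 (by omega) j (by omega)).2.2 (by omega))
      · exact hc.mount n p j h (fun i hi e => hB ⟨i, hi, e⟩) h0 hl hj hj' hjT
    · exact hc'.mount n p j h (fun i hi e => hA ⟨i, hi, e⟩) h0 hl hj hj' hjT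

theorem clean_join {V : Type u} {G : SimpleGraph V} {S₁ S₂ T : Set V}
    (hun : ∀ v, v ∈ S₁ ∨ v ∈ S₂) (hXT : ∀ v, v ∈ S₁ → v ∈ S₂ → v ∈ T) (hTS : ∀ v ∈ T, v ∈ S₁)
    (hc₁ : CleanOn G S₁ T) (hc₂ : CleanOn G S₂ (S₁ ∩ S₂))
    (hsep : ∀ a b, a ∉ S₁ → b ∉ S₂ → ¬ G.Adj a b)
    (hnb : ∀ x y b, x ∈ S₁ → x ∈ S₂ → y ∈ S₁ → y ∈ S₂ → b ∈ S₁ → G.Adj x b → G.Adj y b) :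
    CleanOn G Set.univ T := by
  have hsep' : ∀ a b, a ∉ S₁ → b ∉ S₂ → ¬ G.Adj b a := fun a b ha hb h => hsep a b ha hb h.symm
  -- an induced path with both ends in `S₁` avoids one of the sides
  have L1 : ∀ n p, IP G n p → p 0 ∈ S₁ → p (n - 1) ∈ S₁ →
      (∀ i, i < n → p i ∈ S₁) ∨ (∀ i, i < n → p i ∈ S₂) := by
    intro n p h h0 hl
    by_contra hcon
    push Not at hcon
    obtain ⟨⟨a, ha, haA⟩, ⟨b, hb, hbB⟩⟩ := hcon
    have haS : p a ∈ S₂ := (hun _).resolve_left haA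
    have step : ∀ k, k + 1 < n → G.Adj (p k) (p (k + 1)) := fun k hk =>
      ((h k (by omega) (k + 1) hk).2).2 (by omega)
    have hm : ∃ m x, m < n ∧ x < n ∧ p m ∉ S₂ ∧ p x ∈ S₂ ∧ G.Adj (p m) (p x) := by
      rcases le_total a b with hab | hab
      · obtain ⟨k, h1, h2, h3, h4⟩ := cross (Q := fun i => p i ∈ S₂) hab haS hbB
        exact ⟨k + 1, k, by omega, by omega, h4, h3, (step k (by omega)).symm⟩
      · obtain ⟨k, h1, h2, h3, h4⟩ := cross (Q := fun i => p i ∉ S₂) hab hbB (not_not.2 haS)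
        exact ⟨k, k + 1, by omega, by omega, h3, not_not.1 h4, step k (by omega)⟩
    obtain ⟨m, x, hm, hx, hmB, hxS, hadj⟩ := hm
    have hmS : p m ∈ S₁ := (hun _).resolve_right hmB
    have hxS' : p x ∈ S₁ := by by_contra hx'; exact hsep _ _ hx' hmB hadj.symm
    have hX : ∀ i, i < n → p i ∈ S₁ → p i ∈ S₂ → i = m + 1 ∨ m = i + 1 := by
      intro i hi h1 h2
      have := hnb _ _ _ hxS' hxS h1 h2 hmS hadj.symm
      rw [(h i hi m hm).2] at this
      omega
    have ham : a ≠ m := by rintro rfl; exact haA hmS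
    rcases lt_or_gt_of_ne ham with hlt | hlt
    · obtain ⟨k, h1, h2, h3, h4⟩ := cross (Q := fun i => p i ∈ S₁) (Nat.zero_le a) h0 haA
      have := hX k (by omega) h3 (by by_contra hk; exact hsep _ _ h4 hk (step k (by omega)).symm)
      omega
    · obtain ⟨k, h1, h2, h3, h4⟩ := cross (Q := fun i => p i ∉ S₁) (show a ≤ n - 1 by omega) haA
        (not_not.2 hl)
      have := hX (k + 1) (by omega) (not_not.1 h4)
        (by by_contra hk; exact hsep _ _ h3 hk (step k (by omega)))
      omega
  have tri : ∀ a b c, G.Adj a b → G.Adj b c → G.Adj a c → False := by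
    intro a b c hab hbc hac
    by_cases h : a ∈ S₁ ∧ b ∈ S₁ ∧ c ∈ S₁
    · exact hc₁.tri a h.1 b h.2.1 c h.2.2 hab hbc hac
    by_cases h' : a ∈ S₂ ∧ b ∈ S₂ ∧ c ∈ S₂
    · exact hc₂.tri a h'.1 b h'.2.1 c h'.2.2 hab hbc hac
    have := hab.symm
    have := hbc.symm
    have := hac.symm
    grind
  have stab : ∀ a b, a ∈ T → b ∈ T → G.Adj a b → False := fun a b ha hb =>
    hc₁.stab a (hTS a ha) b (hTS b hb) ha hb
  constructor
  · exact fun a _ b _ c _ => tri a b c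
  · exact fun a _ b _ => stab a b
  · intro n c w h4 h _ _ h3
    by_cases hA : ∀ i, i < n → c i ∈ S₁
    · by_cases hw : w ∈ S₁
      · exact hc₁.wheel n c w h4 h hA hw h3
      have hN : ∀ i, i < n → G.Adj w (c i) → c i ∈ S₂ := fun i _ hadj => by
        by_contra hi; exact hsep _ _ hw hi hadj
      obtain ⟨i, j, k, hi, hj, hk, hij, hjk, hik, h1, h2, h3⟩ := h3
      obtain ⟨m, hm, hadj⟩ : ∃ m, m < n ∧ G.Adj (c i) (c m) := by
        by_cases hi' : i + 1 < n
        · exact ⟨i + 1, hi', (h _ hi _ hi').2.2 (by omega)⟩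
        · exact ⟨0, by omega, (h _ hi _ (by omega)).2.2 (by omega)⟩
      refine h.no3 hm ⟨i, j, k, hi, hj, hk, hij, hjk, hik, hadj.symm, ?_, ?_⟩
      · exact (hnb _ _ _ (hA i hi) (hN i hi h1) (hA j hj) (hN j hj h2) (hA m hm) hadj).symm
      · exact (hnb _ _ _ (hA i hi) (hN i hi h1) (hA k hk) (hN k hk h3) (hA m hm) hadj).symm
    by_cases hB : ∀ i, i < n → c i ∈ S₂
    · by_cases hw : w ∈ S₂
      · exact hc₂.wheel n c w h4 h hB hw h3
      have hN : ∀ v, G.Adj w v → v ∈ S₁ := fun v hadj => by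
        by_contra hi; exact hsep' _ _ hi hw hadj
      have h3' := h3
      obtain ⟨i, j, k, hi, hj, hk, hij, hjk, hik, h1, h2, -⟩ := h3'
      obtain ⟨m, hm, hadj⟩ : ∃ m, m < n ∧ G.Adj (c i) (c m) := by
        by_cases hi' : i + 1 < n
        · exact ⟨i + 1, hi', (h _ hi _ hi').2.2 (by omega)⟩
        · exact ⟨0, by omega, (h _ hi _ (by omega)).2.2 (by omega)⟩
      have hmX : c m ∉ S₁ := fun hm1 => stab _ _ (hXT _ (hN _ h1) (hB i hi))
        (hXT _ hm1 (hB m hm)) hadj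
      obtain ⟨c', h', e0, hr, -, ht⟩ := h.rot m hm
      have hB' : ∀ i, i < n → c' i ∈ S₂ := by
        intro i hi; obtain ⟨j, hj, e⟩ := hr i hi; rw [e]; exact hB j hj
      obtain ⟨i', j', k', q1, q2, q3, q4, q5, q6, q7, q8, q9⟩ := ht _ h3
      have h3'' : Three n c' (· ∈ S₁ ∩ S₂) :=
        ⟨i', j', k', q1, q2, q3, q4, q5, q6, ⟨hN _ q7, hB' _ q1⟩, ⟨hN _ q8, hB' _ q2⟩,
          ⟨hN _ q9, hB' _ q3⟩⟩
      refine hc₂.mount3 h'.path (fun i hi => hB' _ (by omega)) (h3''.tail ?_)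
      rw [e0]
      exact fun hh => hmX hh.1
    push Not at hA hB
    -- normalise the cycle
    obtain ⟨d, hd, hd0, ⟨x, hx, hxS⟩, hdA, hd3⟩ : ∃ d, IC G n d ∧ d 0 ∉ S₂ ∧
        (∃ x, x < n ∧ d x ∈ S₁ ∧ d x ∈ S₂ ∧ G.Adj (d 0) (d x)) ∧
        (∃ a, a < n ∧ d a ∉ S₁) ∧ Three n d (G.Adj w) := by
      obtain ⟨a, ha, haA⟩ := hA
      obtain ⟨b, hb, hbB⟩ := hB
      obtain ⟨c₁, h₁, e₁, hr₁, hs₁, ht₁⟩ := h.rot a ha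
      obtain ⟨b₁, hb₁, eb₁⟩ := hs₁ b hb
      have g0 : c₁ 0 ∈ S₂ := by rw [e₁]; exact (hun _).resolve_left haA
      obtain ⟨k, -, k2, k3, k4⟩ := cross (Q := fun i => c₁ i ∈ S₂) (Nat.zero_le b₁) g0
        (by rw [← eb₁]; exact hbB)
      obtain ⟨c₂, h₂, e₂, hr₂, hs₂, ht₂⟩ := h₁.rot (k + 1) (by omega)
      obtain ⟨y, hy, ey⟩ := hs₂ k (by omega)
      obtain ⟨z, hz, ez⟩ := hs₂ 0 (by omega)
      have hadj := (h₁ (k + 1) (by omega) k (by omega)).2.2 (by omega)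
      refine ⟨c₂, h₂, by rw [e₂]; exact k4, ⟨y, hy, ?_, by rw [← ey]; exact k3, ?_⟩,
        ⟨z, hz, by rw [← ez, e₁]; exact haA⟩, ht₂ _ (ht₁ _ h3)⟩
      · rw [← ey]; by_contra hk; exact hsep' _ _ hk k4 hadj
      · rw [← ey, e₂]; exact hadj
    clear hA hB
    obtain ⟨hxS₁, hxS₂, hxadj⟩ := hxS
    have hd01 : d 0 ∈ S₁ := (hun _).resolve_right hd0
    have hbadj : ∀ y, y ∈ S₁ → y ∈ S₂ → G.Adj y (d 0) := fun y h1 h2 =>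
      hnb _ _ _ hxS₁ hxS₂ h1 h2 hd01 hxadj.symm
    have hX : ∀ i, i < n → d i ∈ S₁ → d i ∈ S₂ → i = 1 ∨ i + 1 = n := by
      intro i hi h1 h2
      have := hbadj _ h1 h2
      rw [(hd i hi 0 (by omega)).2] at this
      omega
    have step : ∀ k, k + 1 < n → G.Adj (d k) (d (k + 1)) := fun k hk =>
      ((hd k (by omega) (k + 1) hk).2).2 (by omega)
    obtain ⟨a, ha, haA⟩ := hdA
    have ha0 : a ≠ 0 := by rintro rfl; exact haA hd01
    have d1S : d 1 ∈ S₁ := by by_contra hk; exact hsep' _ _ hk hd0 (step 0 (by omega))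
    have dlS : d (n - 1) ∈ S₁ := by
      by_contra hk
      exact hsep' _ _ hk hd0 ((hd 0 (by omega) (n - 1) (by omega)).2.2 (by omega))
    have d1X : d 1 ∈ S₂ := by
      obtain ⟨k, k1, k2, k3, k4⟩ := cross (Q := fun i => d i ∈ S₁) (show 1 ≤ a by omega) d1S haA
      have k5 : d k ∈ S₂ := by by_contra hk; exact hsep' _ _ k4 hk (step k (by omega))
      rcases hX k (by omega) k3 k5 with e | e
      · rwa [e] at k5
      · omega
    have dlX : d (n - 1) ∈ S₂ := by
      obtain ⟨k, k1, k2, k3, k4⟩ := cross (Q := fun i => d i ∉ S₁) (show a ≤ n - 1 by omega) haA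
        (not_not.2 dlS)
      have k5 : d (k + 1) ∈ S₂ := by by_contra hk; exact hsep _ _ k3 hk (step k (by omega))
      rcases hX (k + 1) (by omega) (not_not.1 k4) k5 with e | e
      · omega
      · rwa [show n - 1 = k + 1 by omega]
    have ha1 : a ≠ 1 := by rintro rfl; exact haA d1S
    have hal : a ≠ n - 1 := by rintro rfl; exact haA dlS
    have hint : ∀ i, 2 ≤ i → i + 2 ≤ n → d i ∉ S₁ := by
      intro i hi1 hi2 hiS
      rcases le_total a i with hai | hai
      · obtain ⟨k, k1, k2, k3, k4⟩ := cross (Q := fun i => d i ∉ S₁) hai haA (not_not.2 hiS)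
        have k5 : d (k + 1) ∈ S₂ := by by_contra hk; exact hsep _ _ k3 hk (step k (by omega))
        have := hX (k + 1) (by omega) (not_not.1 k4) k5
        omega
      · obtain ⟨k, k1, k2, k3, k4⟩ := cross (Q := fun i => d i ∈ S₁) hai hiS haA
        have k5 : d k ∈ S₂ := by by_contra hk; exact hsep' _ _ k4 hk (step k (by omega))
        have := hX k (by omega) k3 k5
        omega
    have hS2 : ∀ i, 1 ≤ i → i < n → d i ∈ S₂ := by
      intro i hi1 hi2
      by_cases e1 : i = 1
      · rwa [e1]
      by_cases e2 : i = n - 1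
      · rwa [e2]
      exact (hun _).resolve_left (hint i (by omega) (by omega))
    by_cases hw1 : w ∈ S₁
    swap
    · -- `w ∈ A`
      refine hc₂.fan (n - 1) _ w hd.path (fun i hi => hS2 _ (by omega) (by omega))
        ((hun _).resolve_left hw1) ⟨d1S, d1X⟩ ?_ (hd3.tail (hsep _ _ hw1 hd0))
      beta_reduce
      rw [show n - 1 - 1 + 1 = n - 1 by omega]
      exact ⟨dlS, dlX⟩
    by_cases hw2 : w ∈ S₂
    swap
    · -- `w ∈ B`
      have hno : ∀ i, i < n → G.Adj w (d i) → i = 0 ∨ i = 1 ∨ i = n - 1 := by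
        intro i hi hadj
        by_contra hcon
        exact hsep' _ _ (hint i (by omega) (by omega)) hw2 hadj
      obtain ⟨i, j, k, hij, hjk, hk, h1, h2, h3⟩ := hd3.lt
      have e1 := hno i (by omega) h1
      have e2 := hno j (by omega) h2
      have e3 := hno k (by omega) h3
      exact tri _ _ _ h1 ((hd i (by omega) j (by omega)).2.2 (by omega)) h2
    -- `w ∈ X`
    have hwT := hXT _ hw1 hw2
    have nw1 : ¬ G.Adj w (d 1) := stab _ _ hwT (hXT _ d1S d1X)
    have nwl : ¬ G.Adj w (d (n - 1)) := stab _ _ hwT (hXT _ dlS dlX)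
    obtain ⟨i, j, k, hij, hjk, hk, -, g2, g3⟩ := hd3.lt
    have hkn : k ≠ n - 1 := by rintro rfl; exact nwl g3
    have hj1 : j ≠ 1 := by rintro rfl; exact nw1 g2
    classical
    have hex : ∃ q, 1 ≤ q ∧ q < n ∧ G.Adj w (d q) := ⟨j, by omega, by omega, g2⟩
    obtain ⟨q, hq, hqm⟩ : ∃ q, (1 ≤ q ∧ q < n ∧ G.Adj w (d q)) ∧
        ∀ r, (1 ≤ r ∧ r < n ∧ G.Adj w (d r)) → q ≤ r :=
      ⟨Nat.find hex, Nat.find_spec hex, fun r hr => Nat.find_min' hex hr⟩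
    have hex' : ∃ s, s < n ∧ G.Adj w (d (n - 1 - s)) :=
      ⟨n - 1 - k, by omega, by rwa [show n - 1 - (n - 1 - k) = k by omega]⟩
    obtain ⟨r, hr, hrm⟩ : ∃ q, (q < n ∧ G.Adj w (d q)) ∧
        ∀ r, (r < n ∧ G.Adj w (d r)) → r ≤ q := by
      refine ⟨n - 1 - Nat.find hex', ⟨by omega, (Nat.find_spec hex').2⟩, fun r hr => ?_⟩
      have := Nat.find_min' hex' (m := n - 1 - r)
        ⟨by omega, by rw [show n - 1 - (n - 1 - r) = r by omega]; exact hr.2⟩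
      omega
    have hqj := hqm j ⟨by omega, by omega, g2⟩
    have hkr := hrm k ⟨hk, g3⟩
    have hq1 : q ≠ 1 := by rintro rfl; exact nw1 hq.2.2
    have hrn : r ≠ n - 1 := by rintro rfl; exact nwl hr.2
    have hr1 := hr.1
    have hqr : r ≠ q + 1 := by
      intro e
      exact tri _ _ _ hq.2.2 ((hd q (by omega) r (by omega)).2.2 (by omega)) hr.2
    have hwd : ∀ i, i < n → w ≠ d i := by
      intro i hi e
      rcases hX i hi (e ▸ hw1) (e ▸ hw2) with e1 | e1
      · have u1 := hq.2.2
        have u2 := hr.2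
        rw [e, (hd i hi _ (by omega)).2] at u1 u2
        omega
      · have u1 := hq.2.2
        have u2 := hr.2
        rw [e, (hd i hi _ (by omega)).2] at u1 u2
        omega
    have wadj1 : ∀ i, 1 ≤ i → i ≤ q → (G.Adj w (d i) ↔ i = q) := by
      intro i h1 h2
      refine ⟨fun hh => ?_, fun e => by rw [e]; exact hq.2.2⟩
      have := hqm i ⟨h1, by omega, hh⟩
      omega
    have wadj2 : ∀ i, i < n → r ≤ i → (G.Adj w (d i) ↔ i = r) := by
      intro i h1 h2
      refine ⟨fun hh => ?_, fun e => by rw [e]; exact hr.2⟩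
      have := hrm i ⟨h1, hh⟩
      omega
    let pp : ℕ → V := fun i => if i < q then d (i + 1) else if i = q then w else d (i - q - 1 + r)
    have P1 : ∀ i, i < q → pp i = d (i + 1) := fun i hi => by simp [pp, hi]
    have P2 : pp q = w := by simp [pp]
    have P3 : ∀ i, q < i → pp i = d (i - q - 1 + r) := fun i hi => by
      simp [pp, show ¬ i < q by omega, show i ≠ q by omega]
    have hpp : IP G (q + 1 + (n - r)) pp := by
      intro i hi j hj
      rcases lt_trichotomy i q with hi' | hi' | hi' <;>
        rcases lt_trichotomy j q with hj' | hj' | hj'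
      · rw [P1 i hi', P1 j hj', (hd _ (by omega) _ (by omega)).2]
        exact ⟨fun e => by have := (hd _ (by omega) _ (by omega)).1 e; omega, by omega⟩
      · rw [P1 i hi', hj', P2, G.adj_comm, wadj1 _ (by omega) (by omega)]
        exact ⟨fun e => absurd e.symm (hwd _ (by omega)), by omega⟩
      · rw [P1 i hi', P3 j hj', (hd _ (by omega) _ (by omega)).2]
        exact ⟨fun e => by have := (hd _ (by omega) _ (by omega)).1 e; omega, by omega⟩
      · rw [P1 j hj', hi', P2, wadj1 _ (by omega) (by omega)]
        exact ⟨fun e => absurd e (hwd _ (by omega)), by omega⟩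
      · rw [hi', hj']
        simp
      · rw [P3 j hj', hi', P2, wadj2 _ (by omega) (by omega)]
        exact ⟨fun e => absurd e (hwd _ (by omega)), by omega⟩
      · rw [P3 i hi', P1 j hj', (hd _ (by omega) _ (by omega)).2]
        exact ⟨fun e => by have := (hd _ (by omega) _ (by omega)).1 e; omega, by omega⟩
      · rw [P3 i hi', hj', P2, G.adj_comm, wadj2 _ (by omega) (by omega)]
        exact ⟨fun e => absurd e.symm (hwd _ (by omega)), by omega⟩
      · rw [P3 i hi', P3 j hj', (hd _ (by omega) _ (by omega)).2]
        exact ⟨fun e => by have := (hd _ (by omega) _ (by omega)).1 e; omega, by omega⟩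
    refine hc₂.mount _ pp q hpp ?_ ?_ ?_ (by omega) (by omega) ?_
    · intro i hi
      rcases lt_trichotomy i q with hi' | hi' | hi'
      · rw [P1 i hi']; exact hS2 _ (by omega) (by omega)
      · rw [hi', P2]; exact hw2
      · rw [P3 i hi']; exact hS2 _ (by omega) (by omega)
    · rw [P1 0 (by omega)]; exact ⟨d1S, d1X⟩
    · rw [P3 _ (by omega), show q + 1 + (n - r) - 1 - q - 1 + r = n - 1 by omega]
      exact ⟨dlS, dlX⟩
    · rw [P2]; exact ⟨hw1, hw2⟩
  · intro n p f h _ _ h0 hl h3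
    have hn3 : 3 ≤ n := by obtain ⟨i, j, k, h⟩ := h3.lt; omega
    rcases L1 n p h (hTS _ h0) (hTS _ hl) with hS | hS
    · by_cases hf : f ∈ S₁
      · exact hc₁.fan n p f h hS hf h0 hl h3
      refine hc₁.mount3 h hS ?_
      obtain ⟨i, j, k, hi, hj, hk, hij, hjk, hik, h1, h2, h3⟩ := h3
      have key : ∀ i, i < n → G.Adj f (p i) → p i ∈ T := fun i hi hadj =>
        hXT _ (hS i hi) (by by_contra hk; exact hsep _ _ hf hk hadj)
      exact ⟨i, j, k, hi, hj, hk, hij, hjk, hik, key i hi h1, key j hj h2, key k hk h3⟩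
    · by_cases hf : f ∈ S₂
      · exact hc₂.fan n p f h hS hf ⟨hTS _ h0, hS _ (by omega)⟩ ⟨hTS _ hl, hS _ (by omega)⟩ h3
      refine hc₂.mount3 h hS ?_
      obtain ⟨i, j, k, hi, hj, hk, hij, hjk, hik, h1, h2, h3⟩ := h3
      have key : ∀ i, i < n → G.Adj f (p i) → p i ∈ S₁ ∩ S₂ := fun i hi hadj =>
        ⟨by by_contra hk; exact hsep' _ _ hk hf hadj, hS i hi⟩
      exact ⟨i, j, k, hi, hj, hk, hij, hjk, hik, key i hi h1, key j hj h2, key k hk h3⟩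
  · intro n p j h _ h0 hl hj hj' hjT
    rcases L1 n p h (hTS _ h0) (hTS _ hl) with hS | hS
    · exact hc₁.mount n p j h hS h0 hl hj hj' hjT
    · exact hc₂.mount n p j h hS ⟨hTS _ h0, hS _ (by omega)⟩ ⟨hTS _ hl, hS _ (by omega)⟩ hj hj'
        ⟨hTS _ hjT, hS _ (by omega)⟩

/-- Transfer of cleanness along an induced embedding. -/
theorem CleanOn.map {V W : Type u} {G : SimpleGraph V} {H : SimpleGraph W} {T : Set V}
    {T' : Set W} (hc : CleanOn G Set.univ T) (f : V → W) (hf : Function.Injective f)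
    (hadj : ∀ a b, H.Adj (f a) (f b) ↔ G.Adj a b) (S : Set W) (hS : ∀ w ∈ S, ∃ v, f v = w)
    (hT : ∀ v, f v ∈ T' → v ∈ T) : CleanOn H S T' := by
  have lift : ∀ n (p : ℕ → W), 0 < n → (∀ i, i < n → p i ∈ S) →
      ∃ q : ℕ → V, ∀ i, i < n → p i = f (q i) := by
    intro n p hn hp
    obtain ⟨v₀, -⟩ := hS _ (hp 0 hn)
    have : ∀ i, ∃ v, i < n → p i = f v := by
      intro i
      by_cases hi : i < n
      · obtain ⟨v, hv⟩ := hS _ (hp i hi)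
        exact ⟨v, fun _ => hv.symm⟩
      · exact ⟨v₀, fun h => absurd h hi⟩
    choose q hq using this
    exact ⟨q, hq⟩
  have ip : ∀ n p q, (∀ i, i < n → p i = f (q i)) → IP H n p → IP G n q := by
    intro n p q e h i hi j hj
    have := h i hi j hj
    rw [e i hi, e j hj, hadj] at this
    exact ⟨fun e => this.1 (by rw [e]), this.2⟩
  have ic : ∀ n p q, (∀ i, i < n → p i = f (q i)) → IC H n p → IC G n q := by
    intro n p q e h i hi j hj
    have := h i hi j hj
    rw [e i hi, e j hj, hadj] at this
    exact ⟨fun e => this.1 (by rw [e]), this.2⟩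
  have th : ∀ n p q w, (∀ i, i < n → p i = f (q i)) → Three n p (H.Adj (f w)) →
      Three n q (G.Adj w) := by
    rintro n p q w e ⟨i, j, k, hi, hj, hk, hij, hjk, hik, h1, h2, h3⟩
    rw [e i hi, hadj] at h1
    rw [e j hj, hadj] at h2
    rw [e k hk, hadj] at h3
    exact ⟨i, j, k, hi, hj, hk, hij, hjk, hik, h1, h2, h3⟩
  constructor
  · intro a ha b hb c hc'
    obtain ⟨a, rfl⟩ := hS a ha
    obtain ⟨b, rfl⟩ := hS b hb
    obtain ⟨c, rfl⟩ := hS c hc'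
    simp only [hadj]
    exact hc.tri a trivial b trivial c trivial
  · intro a ha b hb
    obtain ⟨a, rfl⟩ := hS a ha
    obtain ⟨b, rfl⟩ := hS b hb
    simp only [hadj]
    exact fun h1 h2 => hc.stab a trivial b trivial (hT _ h1) (hT _ h2)
  · intro n c w h4 h hcS hw h3
    obtain ⟨w, rfl⟩ := hS w hw
    obtain ⟨q, hq⟩ := lift n c (by omega) hcS
    exact hc.wheel n q w h4 (ic n c q hq h) (fun _ _ => trivial) trivial (th n c q w hq h3)
  · intro n c w h hcS hw h0 hl h3
    obtain ⟨w, rfl⟩ := hS w hw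
    have hn3 : 3 ≤ n := by obtain ⟨i, j, k, h⟩ := h3.lt; omega
    obtain ⟨q, hq⟩ := lift n c (by omega) hcS
    refine hc.fan n q w (ip n c q hq h) (fun _ _ => trivial) trivial (hT _ ?_) (hT _ ?_)
      (th n c q w hq h3)
    · rwa [← hq _ (by omega)]
    · rwa [← hq _ (by omega)]
  · intro n c j h hcS h0 hl hj hj' hjT
    obtain ⟨q, hq⟩ := lift n c (by omega) hcS
    refine hc.mount n q j (ip n c q hq h) (fun _ _ => trivial) (hT _ ?_) (hT _ ?_) hj hj' (hT _ ?_)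
    · rwa [← hq _ (by omega)]
    · rwa [← hq _ (by omega)]
    · rwa [← hq _ (by omega)]

theorem seq_of_fin {V : Type u} {n : ℕ} (hn : 0 < n) (g : Fin n → V) :
    ∃ p : ℕ → V, ∀ i : Fin n, p i = g i :=
  ⟨fun i => if h : i < n then g ⟨i, h⟩ else g ⟨0, hn⟩, fun i => by simp⟩

theorem three_of_ncard {V W : Type u} {n : ℕ} {p : ℕ → V} {Q : V → Prop} {M : Set W}
    (hM : 3 ≤ M.ncard) (f : W → V) (g : W → ℕ) (hinj : Function.Injective f)
    (h : ∀ x ∈ M, g x < n ∧ p (g x) = f x ∧ Q (f x)) : Three n p Q := by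
  have hfin : M.Finite := Set.finite_of_ncard_pos (by omega)
  obtain ⟨a, b, c, ha, hb, hc, hab, hac, hbc⟩ := (Set.two_lt_ncard_iff hfin).1 hM
  obtain ⟨a1, a2, a3⟩ := h a ha
  obtain ⟨b1, b2, b3⟩ := h b hb
  obtain ⟨c1, c2, c3⟩ := h c hc
  refine ⟨g a, g b, g c, a1, b1, c1, ?_, ?_, ?_, by rwa [a2], by rwa [b2], by rwa [c2]⟩
  · intro e; apply hab; apply hinj; rw [← a2, ← b2, e]
  · intro e; apply hbc; apply hinj; rw [← b2, ← c2, e]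
  · intro e; apply hac; apply hinj; rw [← a2, ← c2, e]

theorem CleanOn.toGraft {V : Type u} {G : SimpleGraph V} {T : Set V}
    (hc : CleanOn G Set.univ T) : IsCleanGraft G T := by
  classical
  refine ⟨?_, ?_, ?_, ?_, ?_⟩
  · intro s hs
    obtain ⟨a, b, c, hab, hac, hbc, -⟩ := SimpleGraph.is3Clique_iff.1 hs
    exact hc.tri a trivial b trivial c trivial hab hbc hac
  · exact fun u hu v hv h => hc.stab u trivial v trivial hu hv h
  · rintro s ⟨w, n, h4, ⟨e⟩, h3⟩
    obtain ⟨p, hp⟩ := seq_of_fin (show 0 < n by omega) (fun i => ((e.symm i).1.1 : V))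
    refine hc.wheel n p w.1 h4 ?_ (fun _ _ => trivial) trivial ?_
    · intro i hi j hj
      have e1 := hp ⟨i, hi⟩
      have e2 := hp ⟨j, hj⟩
      simp only at e1 e2
      rw [e1, e2]
      refine ⟨fun h => ?_, ?_⟩
      · have := e.symm.injective (Subtype.ext (Subtype.ext h))
        simpa using this
      · have := e.symm.map_rel_iff (a := ⟨i, hi⟩) (b := ⟨j, hj⟩)
        rw [SimpleGraph.cycleGraph_adj'] at this
        refine Iff.trans this ?_
        simp only [Fin.sub_def]
        have key : ∀ i j, i < n → j < n → ((n - j + i) % n = 1 ↔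
            (i = j + 1 ∨ (i = 0 ∧ j + 1 = n))) := by
          intro i j hi hj
          rcases Nat.lt_or_ge i j with hij | hij
          · rw [Nat.mod_eq_of_lt (by omega)]; omega
          · rw [show n - j + i = (i - j) + n by omega, Nat.add_mod_right,
              Nat.mod_eq_of_lt (by omega)]; omega
        rw [key i j hi hj, key j i hj hi]
        omega
    · refine three_of_ncard h3 (fun x => x.1)
        (fun x => if h : x ≠ w then (e ⟨x, h⟩).1 else 0) Subtype.val_injective ?_
      intro x hx
      have hxw : x ≠ w := fun h => by subst h; exact SimpleGraph.irrefl _ hx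
      simp only [ne_eq, hxw, not_false_eq_true, dite_true]
      exact ⟨(e ⟨x, hxw⟩).2, (hp _).trans
        (congrArg (fun y => (y.1.1 : V)) (e.symm_apply_apply ⟨x, hxw⟩)), hx⟩
  · rintro s ⟨w, n, e, h3, h0, hl⟩
    obtain ⟨p, hp⟩ := seq_of_fin (show 0 < n + 1 by omega) (fun i => ((e.symm i).1.1 : V))
    refine hc.fan (n + 1) p w.1 ?_ (fun _ _ => trivial) trivial ?_ ?_ ?_
    · intro i hi j hj
      have e1 := hp ⟨i, hi⟩
      have e2 := hp ⟨j, hj⟩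
      simp only at e1 e2
      rw [e1, e2]
      refine ⟨fun h => ?_, ?_⟩
      · have := e.symm.injective (Subtype.ext (Subtype.ext h))
        simpa using this
      · have := e.symm.map_rel_iff (a := ⟨i, hi⟩) (b := ⟨j, hj⟩)
        rw [SimpleGraph.pathGraph_adj] at this
        refine Iff.trans this ?_
        simp only
        omega
    · have := hp 0
      simp only [Fin.val_zero] at this
      rw [this]; exact h0
    · have := hp (Fin.last n)
      simp only [Fin.val_last] at this
      rw [Nat.add_sub_cancel, this]; exact hl
    · refine three_of_ncard h3 (fun x => x.1)
        (fun x => if h : x ≠ w then (e ⟨x, h⟩).1 else 0) Subtype.val_injective ?_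
      intro x hx
      have hxw : x ≠ w := fun h => by subst h; exact SimpleGraph.irrefl _ hx
      simp only [ne_eq, hxw, not_false_eq_true, dite_true]
      exact ⟨(e ⟨x, hxw⟩).2, (hp _).trans
        (congrArg (fun y => (y.1.1 : V)) (e.symm_apply_apply ⟨x, hxw⟩)), hx⟩
  · rintro s ⟨⟨n, ⟨e⟩⟩, h3⟩
    have hn : 0 < n := by
      have hfin : (Subtype.val ⁻¹' T : Set s).Finite := Set.finite_of_ncard_pos (by omega)
      obtain ⟨a, -⟩ := (Set.two_lt_ncard_iff hfin).1 h3
      exact Nat.lt_of_le_of_lt (Nat.zero_le _) (e a).2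
    obtain ⟨p, hp⟩ := seq_of_fin hn (fun i => ((e.symm i).1 : V))
    refine hc.mount3 (n := n) (p := p) ?_ (fun _ _ => trivial) ?_
    · intro i hi j hj
      have e1 := hp ⟨i, hi⟩
      have e2 := hp ⟨j, hj⟩
      simp only at e1 e2
      rw [e1, e2]
      refine ⟨fun h => ?_, ?_⟩
      · have := e.symm.injective (Subtype.ext h)
        simpa using this
      · have := e.symm.map_rel_iff (a := ⟨i, hi⟩) (b := ⟨j, hj⟩)
        rw [SimpleGraph.pathGraph_adj] at this
        refine Iff.trans this ?_
        simp only
        omega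
    · refine three_of_ncard h3 (fun x => x.1) (fun x => (e x).1) Subtype.val_injective ?_
      intro x hx
      exact ⟨(e x).2, by rw [hp]; simp, hx⟩

theorem obtainable_cleanOn (P : GraftData) (hP : Obtainable P) : CleanOn P.G Set.univ P.T := by
  classical
  induction hP with
  | base =>
    have no3 : ∀ n (p : ℕ → Bool), (∀ i, i < n → ∀ j, j < n → p i = p j → i = j) → n ≤ 2 := by
      intro n p h
      by_contra hn
      have h1 := h 0 (by omega) 1 (by omega)
      have h2 := h 0 (by omega) 2 (by omega)
      have h3 := h 1 (by omega) 2 (by omega)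
      cases e0 : p 0 <;> cases e1 : p 1 <;> cases e2 : p 2 <;> simp_all
    constructor
    · intro a _ b _ c _
      cases a <;> cases b <;> cases c <;> simp
    · intro a _ b _
      cases a <;> cases b <;> simp
    · intro n c w h4 h _ _ _
      have := no3 n c (fun i hi j hj => (h i hi j hj).1)
      omega
    · intro n c w h _ _ _ _ h3
      have := no3 n c (fun i hi j hj => (h i hi j hj).1)
      obtain ⟨i, j, k, h⟩ := h3.lt
      omega
    · intro n c j h _ _ _ _ _ _
      have := no3 n c (fun i hi j hj => (h i hi j hj).1)
      omega
  | pendent P hP t ht ih =>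
    have hss : ∀ a b, (pendentGraph P.G t).Adj (some a) (some b) ↔ P.G.Adj a b := by
      intro a b
      simp only [pendentGraph, SimpleGraph.fromRel_adj]
      have := P.G.adj_comm a b
      have : P.G.Adj a b → a ≠ b := fun h => h.ne
      simp
      grind
    have hns : ∀ b, (pendentGraph P.G t).Adj none b → b = some t := by
      intro b
      simp only [pendentGraph, SimpleGraph.fromRel_adj]
      simp
    refine clean_pendent (t := some t) (t' := none) (T₀ := some '' P.T) ?_ hns (by simp) ?_ ?_ ?_
    · refine ih.map some (Option.some_injective _) hss _ ?_ ?_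
      · intro w hw
        cases w with
        | none => exact absurd rfl hw
        | some v => exact ⟨v, rfl⟩
      · intro v hv; simpa using hv
    · simp [pendentT]
    · exact ⟨t, ht, rfl⟩
    · rintro x hx hx'
      rcases hx with rfl | ⟨y, hy, rfl⟩
      · exact absurd rfl hx'
      · exact ⟨y, hy.1, rfl⟩
  | clone P hP t ht ih =>
    have hss : ∀ a b, (cloneGraph P.G t).Adj (some a) (some b) ↔ P.G.Adj a b := by
      intro a b
      simp only [cloneGraph, SimpleGraph.fromRel_adj]
      have := P.G.adj_comm a b
      have : P.G.Adj a b → a ≠ b := fun h => h.ne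
      simp
      grind
    have hns : ∀ b, (cloneGraph P.G t).Adj none (some b) ↔ P.G.Adj t b := by
      intro b
      simp only [cloneGraph, SimpleGraph.fromRel_adj]
      simp
    have hsn : ∀ b, (cloneGraph P.G t).Adj (some b) none ↔ P.G.Adj b t := by
      intro b
      rw [SimpleGraph.adj_comm, hns, SimpleGraph.adj_comm]
    refine clean_clone (t := some t) (t' := none) ?_ ?_ ?_ (by simp) ?_ ?_
    · refine ih.map some (Option.some_injective _) hss _ ?_ ?_
      · intro w hw
        cases w with
        | none => exact absurd rfl hw
        | some v => exact ⟨v, rfl⟩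
      · intro v hv; simpa [cloneT] using hv
    · refine ih.map (fun v => if v = t then none else some v) ?_ ?_ _ ?_ ?_
      · intro a b hab
        by_cases ha : a = t <;> by_cases hb : b = t <;> simp_all
      · intro a b
        by_cases ha : a = t <;> by_cases hb : b = t <;> simp [ha, hb, hss, hns, hsn]
      · intro w hw
        cases w with
        | none => exact ⟨t, by simp⟩
        | some v => exact ⟨v, by simp_all⟩
      · intro v hv
        by_cases hvt : v = t
        · rwa [hvt]
        · simpa [cloneT, hvt] using hv
    · intro v
      cases v with
      | none => rw [hsn]; simp
      | some v => rw [hss, hns]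
    · exact Or.inr ⟨t, ht, rfl⟩
    · exact Or.inl rfl
  | join P Q hP hQ X hX hnb φ ihP ihQ =>
    have stP : ∀ a b, a ∈ P.T → b ∈ P.T → ¬ P.G.Adj a b := fun a b ha hb =>
      ihP.stab a trivial b trivial ha hb
    have stQ : ∀ a b, a ∈ Q.T → b ∈ Q.T → ¬ Q.G.Adj a b := fun a b ha hb =>
      ihQ.stab a trivial b trivial ha hb
    have hφ : ∀ x y : X, ¬ Q.G.Adj (φ x) (φ y) := fun x y => stQ _ _ (φ x).2 (φ y).2
    have hll : ∀ a b, (joinGraph P.G Q.G X Q.T φ).Adj (Sum.inl a) (Sum.inl b) ↔ P.G.Adj a b := by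
      intro a b
      simp only [joinGraph, SimpleGraph.fromRel_adj]
      constructor
      · rintro ⟨-, (⟨u, v, h1, h2, h3⟩ | ⟨u, v, h1, h2, h3⟩ | ⟨u, v, h1, h2, h3⟩ |
          ⟨u, v, h1, h2, h3⟩) | (⟨u, v, h1, h2, h3⟩ | ⟨u, v, h1, h2, h3⟩ | ⟨u, v, h1, h2, h3⟩ |
          ⟨u, v, h1, h2, h3⟩)⟩
        · cases h1; cases h2; exact h3
        · cases h1
        · cases h2
        · exact absurd h3 (hφ _ _)
        · cases h1; cases h2; exact h3.symm
        · cases h1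
        · cases h2
        · exact absurd h3 (hφ _ _)
      · exact fun h => ⟨by simpa using h.ne, Or.inl (Or.inl ⟨a, b, rfl, rfl, h⟩)⟩
    have hrr : ∀ a b, (joinGraph P.G Q.G X Q.T φ).Adj (Sum.inr a) (Sum.inr b) ↔
        Q.G.Adj a.1 b.1 := by
      intro a b
      simp only [joinGraph, SimpleGraph.fromRel_adj]
      constructor
      · rintro ⟨-, (⟨u, v, h1, h2, h3⟩ | ⟨u, v, h1, h2, h3⟩ | ⟨u, v, h1, h2, h3⟩ |
          ⟨u, v, h1, h2, h3⟩) | (⟨u, v, h1, h2, h3⟩ | ⟨u, v, h1, h2, h3⟩ | ⟨u, v, h1, h2, h3⟩ |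
          ⟨u, v, h1, h2, h3⟩)⟩
        · cases h1
        · cases h1; cases h2; exact h3
        · cases h1
        · cases h1
        · cases h1
        · cases h1; cases h2; exact h3.symm
        · cases h1
        · cases h1
      · exact fun h => ⟨fun e => h.ne (by rw [Sum.inr.inj e]),
          Or.inl (Or.inr (Or.inl ⟨a, b, rfl, rfl, h⟩))⟩
    have hlr : ∀ a b, (joinGraph P.G Q.G X Q.T φ).Adj (Sum.inl a) (Sum.inr b) ↔
        ∃ h : a ∈ X, Q.G.Adj (φ ⟨a, h⟩) b.1 := by
      intro a b
      simp only [joinGraph, SimpleGraph.fromRel_adj]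
      constructor
      · rintro ⟨-, (⟨u, v, h1, h2, h3⟩ | ⟨u, v, h1, h2, h3⟩ | ⟨u, v, h1, h2, h3⟩ |
          ⟨u, v, h1, h2, h3⟩) | (⟨u, v, h1, h2, h3⟩ | ⟨u, v, h1, h2, h3⟩ | ⟨u, v, h1, h2, h3⟩ |
          ⟨u, v, h1, h2, h3⟩)⟩
        · cases h2
        · cases h1
        · cases h1; cases h2; exact ⟨u.2, h3⟩
        · cases h2
        · cases h1
        · cases h2
        · cases h1
        · cases h1
      · rintro ⟨h, h'⟩
        exact ⟨by simp, Or.inl (Or.inr (Or.inr (Or.inl ⟨⟨a, h⟩, b, rfl, rfl, h'⟩)))⟩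
    let S₁ : Set (P.V ⊕ {v : Q.V // v ∉ Q.T}) := Set.range Sum.inl
    let S₂ : Set (P.V ⊕ {v : Q.V // v ∉ Q.T}) := Set.range Sum.inr ∪ Sum.inl '' X
    have l1 : ∀ a, Sum.inl a ∈ S₁ := fun a => ⟨a, rfl⟩
    have r1 : ∀ a, Sum.inr a ∉ S₁ := by rintro a ⟨b, hb⟩; cases hb
    have l2 : ∀ a, Sum.inl a ∈ S₂ ↔ a ∈ X := by intro a; simp [S₂]
    have r2 : ∀ a, Sum.inr a ∈ S₂ := fun a => Or.inl ⟨a, rfl⟩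
    refine clean_join (S₁ := S₁) (S₂ := S₂) ?_ ?_ ?_ ?_ ?_ ?_ ?_
    · rintro (a | a)
      · exact Or.inl (l1 a)
      · exact Or.inr (r2 a)
    · rintro (a | a) h1 h2
      · exact ⟨a, hX ((l2 a).1 h2), rfl⟩
      · exact absurd h1 (r1 a)
    · rintro v ⟨a, -, rfl⟩; exact l1 a
    · refine ihP.map Sum.inl Sum.inl_injective hll _ (fun w hw => hw) ?_
      rintro v ⟨a, ha, e⟩
      cases e; exact ha
    · refine ihQ.map (fun v => if h : v ∈ Q.T then Sum.inl (φ.symm ⟨v, h⟩).1 else Sum.inr ⟨v, h⟩)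
        ?_ ?_ _ ?_ ?_
      · intro a b hab
        by_cases ha : a ∈ Q.T <;> by_cases hb : b ∈ Q.T <;> simp only [ha, hb, dite_true,
          dite_false] at hab
        · have := φ.symm.injective (Subtype.ext (Sum.inl.inj hab))
          simpa using this
        · cases hab
        · cases hab
        · simpa using hab
      · intro a b
        by_cases ha : a ∈ Q.T <;> by_cases hb : b ∈ Q.T <;> simp only [ha, hb, dite_true,
          dite_false]
        · rw [hll]
          exact iff_of_false (stP _ _ (hX (φ.symm _).2) (hX (φ.symm _).2)) (stQ _ _ ha hb)
        · rw [hlr]; simp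
        · rw [SimpleGraph.adj_comm, hlr, SimpleGraph.adj_comm]; simp
        · rw [hrr]
      · rintro (a | a) hw
        · have ha := (l2 a).1 hw
          exact ⟨(φ ⟨a, ha⟩).1, by simp⟩
        · exact ⟨a.1, by simp [a.2]⟩
      · intro v hv
        by_contra hvT
        simp only [hvT, dite_false] at hv
        exact r1 _ hv.1
    · rintro (a | a) (b | b) ha hb
      · exact absurd (l1 a) ha
      · exact absurd (l1 a) ha
      · rw [SimpleGraph.adj_comm, hlr]
        rintro ⟨h, -⟩
        exact hb ((l2 b).2 h)
      · exact absurd (r2 b) hb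
    · rintro (x | x) (y | y) (b | b) hx1 hx2 hy1 hy2 hb
      · rw [hll, hll]
        have := hnb x ((l2 x).1 hx2) y ((l2 y).1 hy2)
        intro h
        have hb : b ∈ P.G.neighborSet x := h
        rw [this] at hb
        exact hb
      all_goals first
        | exact absurd hx1 (r1 _)
        | exact absurd hy1 (r1 _)
        | exact absurd hb (r1 _)

/-- Every graft obtainable from `(K₂, {t})` by a finite sequence of pendent, clone and join
operations is clean; in particular its underlying graph contains no induced wheel. -/
theorem obtainable_isCleanGraft (P : GraftData) (hP : Obtainable P) :
    IsCleanGraft P.G P.T ∧ ∀ s : Set P.V, ¬ IsWheel (P.G.induce s) := by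
  exact ⟨(obtainable_cleanOn P hP).toGraft, (obtainable_cleanOn P hP).toGraft.2.2.1⟩
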